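/- Let d ≥ 8 and let p be a prime with d/2 < p < d − 2. If G is a transitive subgroup of the symmetric group S_d containing a p-cycle, then G contains the alternating group A_d. -/

import Mathlib

/-!
Let `c ∈ G` be the `p`-cycle and `F` its set of `k = d - p ≥ 3` fixed points. Since `p > d / 2`, the
group `G` is primitive, because no nontrivial block system is compatible with `c`
(`isPreprimitive_of_isCycle_of_two_mul_gt`). Jordan's criterion then makes `G` `k`-transitive, so
the setwise stabilizer of `F` induces the full symmetric group on `F`
(`isMultiplyPretransitive_of_isCycle_of_prime`).

As `⟨c⟩` is a Sylow `p`-subgroup of the pointwise stabilizer of `F`, the Frattini argument shows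
that already the normalizer of `⟨c⟩` in `G` induces the full symmetric group on `F`
(`exists_mem_conj_mem_zpowers_and_eqOn`). Commutators in this normalizer centralize `c`, since
`Aut ⟨c⟩` is abelian (`commute_of_conj_mem_zpowers`). As `k ≥ 3`, some commutator `z` acts on `F` as
a 3-cycle; on the support of `c` it acts as a power of `c`. Since `p ≠ 3`, the element `z ^ p` is a
3-cycle, and a primitive group containing a 3-cycle contains the alternating group.
-/

open Equiv Equiv.Perm MulAction Pointwise in
/-- A transitive group of degree less than `2 * p` that contains a `p`-cycle `c`, `p` prime, is
primitive: if a block `B` meets the support of `c`, then the number of translates of `B` under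
powers of `c` divides `p`. If it is `1`, then `B` contains the whole support and is too large for a
proper block; if it is `p`, then `B` has too many translates to contain two points. -/
theorem isPreprimitive_of_isCycle_of_two_mul_gt {α : Type*} [Fintype α] [DecidableEq α]
    {G : Subgroup (Perm α)} (hG : IsPretransitive G α) {c : Perm α} (hc : c.IsCycle) (hcG : c ∈ G)
    (hp : c.support.card.Prime) (hlow : Fintype.card α < 2 * c.support.card) :
    IsPreprimitive G α := by
  obtain ⟨a, ha⟩ := hc.nonempty_support
  refine IsPreprimitive.of_isTrivialBlock_base a fun {B} haB hB ↦ ?_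
  let c' : G := ⟨c, hcG⟩
  have hcard : Nat.card (Subgroup.zpowers c') = c.support.card := by
    rw [Nat.card_zpowers, ← hc.orderOf, ← Subgroup.orderOf_coe]
  have hdvd : (orbit (Subgroup.zpowers c') B).ncard ∣ c.support.card := by
    rw [← index_stabilizer, ← hcard]
    exact Subgroup.index_dvd_card _
  rcases (Nat.dvd_prime hp).1 hdvd with h1 | h1
  · right
    apply hB.eq_univ_of_card_lt
    have hsub : (c.support : Set α) ⊆ B := by
      intro x hx
      obtain ⟨i, rfl⟩ := hc.sameCycle (mem_support.mp ha) (mem_support.mp hx)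
      obtain ⟨B', hB'⟩ := Set.ncard_eq_one.mp h1
      have h2 : B = B' := by
        have := mem_orbit_self (M := Subgroup.zpowers c') B
        rwa [hB'] at this
      have h3 : (⟨c' ^ i, i, rfl⟩ : Subgroup.zpowers c') • B = B' := by
        have := mem_orbit B (⟨c' ^ i, i, rfl⟩ : Subgroup.zpowers c')
        rwa [hB'] at this
      rw [h2, ← h3]
      exact Set.smul_mem_smul_set haB
    have := Set.ncard_le_ncard hsub
    rw [Set.ncard_coe_finset] at this
    rw [Nat.card_eq_fintype_card]
    omega
  · left
    apply hB.subsingleton_of_card_lt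
    have hsub : orbit (Subgroup.zpowers c') B ⊆ orbit G B := by
      rintro _ ⟨g, rfl⟩
      exact ⟨g.1, rfl⟩
    have := Set.ncard_le_ncard hsub
    rw [Nat.card_eq_fintype_card]
    omega

open Equiv Equiv.Perm MulAction in
/-- Jordan: a primitive group containing a `p`-cycle with `p` prime is `k`-transitive, where `k` is
the number of fixed points of the cycle. Indeed the pointwise stabilizer of these fixed points is
transitive, hence primitive, on the remaining `p` points. -/
theorem isMultiplyPretransitive_of_isCycle_of_prime {α : Type*} [Fintype α] [DecidableEq α]
    {G : Subgroup (Perm α)} (hG : IsPreprimitive G α) {c : Perm α} (hc : c.IsCycle) (hcG : c ∈ G)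
    (hp : c.support.card.Prime) (hlt : c.support.card < Fintype.card α) :
    IsMultiplyPretransitive G α ((c.support : Set α)ᶜ.ncard) := by
  obtain ⟨n, hn⟩ := Nat.exists_eq_add_of_lt hlt
  have hs : (c.support : Set α)ᶜ.ncard = n + 1 := by
    apply Nat.add_left_cancel
    rw [Set.ncard_add_ncard_compl, Set.ncard_coe_finset, Nat.card_eq_fintype_card, hn, add_assoc]
  have hlt' : n + 2 < Nat.card α := by
    have := hp.two_le
    rw [Nat.card_eq_fintype_card]; omega
  have := isPretransitive_of_isCycle_mem hc hcG
  have hprim : IsPreprimitive (fixingSubgroup G (c.support : Set α)ᶜ)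
      (SubMulAction.ofFixingSubgroup G (c.support : Set α)ᶜ) := by
    apply IsPreprimitive.of_prime_card
    classical
    convert! hp
    rw [Nat.card_eq_fintype_card, Fintype.card_subtype]
    congr 1
    ext x
    simp [SubMulAction.mem_ofFixingSubgroup_iff]
  have h := hG.isMultiplyPreprimitive hs hlt' hprim
  have := h.isMultiplyPretransitive
  rw [hs]
  exact isMultiplyPretransitive_of_le (n := n + 2) (by omega) (by omega)

open Equiv Equiv.Perm in
/-- Sylow conjugacy in degree less than `2 * p`: since `p ^ 2` does not divide the factorial of the
degree, elements of order `p` of `K` generate Sylow `p`-subgroups of `K`. -/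
theorem exists_conj_conj_mem_zpowers {α : Type*} [Fintype α] [DecidableEq α]
    {p : ℕ} (hp : p.Prime) (hlow : Fintype.card α < 2 * p)
    (K : Subgroup (Perm α)) {x y : Perm α} (hx : x ∈ K) (hy : y ∈ K)
    (hxo : orderOf x = p) (hyo : orderOf y = p) :
    ∃ h ∈ K, h * y * h⁻¹ ∈ Subgroup.zpowers x := by
  have : Fact p.Prime := ⟨hp⟩
  have hple : p ≤ Fintype.card α := by
    rw [← hp.dvd_factorial, ← Fintype.card_perm, ← hxo]
    exact orderOf_dvd_card
  have hd : padicValNat p (Fintype.card α).factorial = 1 := by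
    obtain ⟨m, hm⟩ := Nat.exists_eq_add_of_le hple
    have := padicValNat_factorial_mul_add (p := p) (n := m) 1 (by omega)
    rw [mul_one, ← hm] at this
    rw [this]
    simpa using padicValNat_factorial_mul (p := p) 1
  have hfac : (Nat.card K).factorization p = 1 := by
    apply le_antisymm
    · have h1 : Nat.card K ∣ (Fintype.card α).factorial := by
        rw [← Nat.card_eq_fintype_card, ← Nat.card_perm]
        exact K.card_subgroup_dvd_card
      have := (Nat.factorization_le_iff_dvd Nat.card_pos.ne' (Nat.factorial_ne_zero _)).2 h1 p
      rwa [Nat.factorization_def (Fintype.card α).factorial hp, hd] at this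
    · rw [← hp.dvd_iff_one_le_factorization Nat.card_pos.ne', ← hxo,
        ← Subgroup.orderOf_mk x hx]
      exact orderOf_dvd_natCard _
  have hcard : ∀ z : Perm α, ∀ hz : z ∈ K, orderOf z = p →
      Nat.card (Subgroup.zpowers (⟨z, hz⟩ : K)) = p ^ (Nat.card K).factorization p := by
    intro z hz hzo
    rw [hfac, pow_one, Nat.card_zpowers, Subgroup.orderOf_mk, hzo]
  let P := Sylow.ofCard _ (hcard x hx hxo)
  let Q := Sylow.ofCard _ (hcard y hy hyo)
  obtain ⟨h, hh⟩ := MulAction.exists_smul_eq K Q P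
  refine ⟨h, h.2, ?_⟩
  have h1 : (⟨y, hy⟩ : K) ∈ (Q : Subgroup K) := Subgroup.mem_zpowers _
  have h2 : h * ⟨y, hy⟩ * h⁻¹ ∈ P := by
    rw [← hh]
    exact ⟨_, h1, rfl⟩
  obtain ⟨i, hi⟩ := (h2 : _ ∈ Subgroup.zpowers (⟨x, hx⟩ : K))
  exact ⟨i, congrArg Subtype.val hi⟩

open Equiv Equiv.Perm MulAction in
/-- A Frattini argument: the normalizer of `⟨c⟩` in `G` induces every permutation of the fixed
points of `c`. The prescribed permutation `σ` is realized by some `g ∈ G` by multiple transitivity;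
`g` is then corrected by an element of the pointwise stabilizer of these points. -/
theorem exists_mem_conj_mem_zpowers_and_eqOn {α : Type*} [Fintype α] [DecidableEq α]
    {G : Subgroup (Perm α)} {c : Perm α} (hc : c.IsCycle) (hcG : c ∈ G)
    (hp : c.support.card.Prime) (hlow : Fintype.card α < 2 * c.support.card)
    (hG : IsMultiplyPretransitive G α ((c.support : Set α)ᶜ.ncard))
    (σ : Perm α) (hσ : ∀ x ∈ c.support, σ x = x) :
    ∃ g ∈ G, g * c * g⁻¹ ∈ Subgroup.zpowers c ∧ ∀ x ∉ c.support, g x = σ x := by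
  have hσ' : ∀ x ∉ c.support, σ x ∉ c.support := fun x hx h ↦
    hx (σ.injective (hσ _ h) ▸ h)
  let e : Fin ((c.support : Set α)ᶜ.ncard) ≃ ((c.support : Set α)ᶜ : Set α) :=
    (Finite.equivFinOfCardEq rfl).symm
  let f : Fin ((c.support : Set α)ᶜ.ncard) ↪ α := e.toEmbedding.trans (Function.Embedding.subtype _)
  obtain ⟨g, hg⟩ := hG.exists_smul_eq f (f.trans σ.toEmbedding)
  have hgσ : ∀ x ∉ c.support, g.1 x = σ x := by
    intro x hx
    have h1 : f (e.symm ⟨x, by simpa using hx⟩) = x := by simp [f]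
    have h2 := DFunLike.congr_fun hg (e.symm ⟨x, by simpa using hx⟩)
    simp only [Function.Embedding.smul_apply, Function.Embedding.trans_apply, h1] at h2
    exact h2
  let K : Subgroup (Perm α) := G ⊓ fixingSubgroup (Perm α) (c.support : Set α)ᶜ
  have hK : ∀ z, z ∈ K ↔ z ∈ G ∧ ∀ x ∉ c.support, z x = x := by
    intro z
    simp [K, mem_fixingSubgroup_iff, Subgroup.mem_inf]
  have hcK : c ∈ K := (hK c).2 ⟨hcG, fun x hx ↦ notMem_support.1 hx⟩
  -- `g` permutes the fixed points of `c`, so `g * c * g⁻¹` fixes each of them.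
  have hgcK : g.1 * c * g.1⁻¹ ∈ K := by
    refine (hK _).2 ⟨G.mul_mem (G.mul_mem g.2 hcG) (G.inv_mem g.2), fun x hx ↦ ?_⟩
    have hσx : σ (σ⁻¹ x) = x := σ.apply_symm_apply x
    have hx' : σ⁻¹ x ∉ c.support := fun h ↦ by
      have h0 := hσ _ h
      rw [hσx] at h0
      exact hx (h0 ▸ h)
    have h1 : g.1⁻¹ x = σ⁻¹ x := by
      rw [Perm.inv_eq_iff_eq, hgσ _ hx', hσx]
    simp only [Perm.mul_apply, h1, notMem_support.1 hx', hgσ _ hx', hσx]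
  obtain ⟨h, hhK, hh⟩ := exists_conj_conj_mem_zpowers hp hlow K hcK hgcK hc.orderOf
    (by
      rw [← hc.orderOf]
      exact orderOf_injective (MulAut.conj g.1).toMonoidHom (MulAut.conj g.1).injective c)
  refine ⟨h * g.1, G.mul_mem ((hK h).1 hhK).1 g.2, by simpa [mul_assoc] using hh, fun x hx ↦ ?_⟩
  rw [Perm.mul_apply, hgσ x hx, ((hK h).1 hhK).2 _ (hσ' x hx)]

/-- Commutators of elements normalizing a cyclic group centralize it, because the automorphism group
of a cyclic group is abelian. -/
theorem commute_of_conj_mem_zpowers {H : Type*} [Group H] {c g₁ g₂ : H}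
    (h₁ : g₁ * c * g₁⁻¹ ∈ Subgroup.zpowers c) (h₂ : g₂ * c * g₂⁻¹ ∈ Subgroup.zpowers c) :
    Commute ((g₂ * g₁)⁻¹ * (g₁ * g₂)) c := by
  obtain ⟨a, ha : c ^ a = _⟩ := h₁
  obtain ⟨b, hb : c ^ b = _⟩ := h₂
  have h12 : (g₁ * g₂) * c * (g₁ * g₂)⁻¹ = c ^ (a * b) := by
    rw [zpow_mul, ha, conj_zpow, hb]; group
  have h21 : (g₂ * g₁) * c * (g₂ * g₁)⁻¹ = c ^ (a * b) := by
    rw [mul_comm a, zpow_mul, hb, conj_zpow, ha]; group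
  rw [commute_iff_eq]
  have h := h12.trans h21.symm
  rw [mul_inv_eq_iff_eq_mul] at h
  rw [mul_assoc, h]
  group

theorem transitive_with_p_cycle_contains_alternating
    (d p : ℕ) (hd : 8 ≤ d) (hp : p.Prime) (hlow : d < 2 * p) (hhigh : p < d - 2)
    (G : Subgroup (Equiv.Perm (Fin d)))
    (htrans : ∀ x y : Fin d, ∃ g ∈ G, g x = y)
    (hcyc : ∃ g ∈ G, g.IsCycle ∧ g.support.card = p) :
    alternatingGroup (Fin d) ≤ G := by
  obtain ⟨c, hcG, hc, rfl⟩ := hcyc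
  have hlow' : Fintype.card (Fin d) < 2 * c.support.card := by simpa using hlow
  have hG : MulAction.IsPretransitive G (Fin d) :=
    ⟨fun x y ↦ let ⟨g, hg, hgx⟩ := htrans x y; ⟨⟨g, hg⟩, hgx⟩⟩
  have hprim := isPreprimitive_of_isCycle_of_two_mul_gt hG hc hcG hp hlow'
  have hmulti := isMultiplyPretransitive_of_isCycle_of_prime hprim hc hcG hp
    (by rw [Fintype.card_fin]; omega)
  obtain ⟨u, v, w, hu, hv, hw, huv, huw, hvw⟩ :
      ∃ u v w, u ∈ c.supportᶜ ∧ v ∈ c.supportᶜ ∧ w ∈ c.supportᶜ ∧ u ≠ v ∧ u ≠ w ∧ v ≠ w := by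
    rw [← Finset.two_lt_card_iff, Finset.card_compl, Fintype.card_fin]
    omega
  rw [Finset.mem_compl] at hu hv hw
  have hswap : ∀ a b, a ∉ c.support → b ∉ c.support → ∀ x ∈ c.support, Equiv.swap a b x = x :=
    fun a b ha hb x hx ↦ Equiv.swap_apply_of_ne_of_ne (fun h ↦ ha (h ▸ hx)) (fun h ↦ hb (h ▸ hx))
  have hswap' : ∀ a b, a ∉ c.support → b ∉ c.support → ∀ x ∉ c.support,
      Equiv.swap a b x ∉ c.support :=
    fun a b ha hb x hx h ↦ hx ((Equiv.swap a b).injective (hswap a b ha hb _ h) ▸ h)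
  obtain ⟨g₁, hg₁, hn₁, he₁⟩ := exists_mem_conj_mem_zpowers_and_eqOn hc hcG hp hlow' hmulti _
    (hswap u v hu hv)
  obtain ⟨g₂, hg₂, hn₂, he₂⟩ := exists_mem_conj_mem_zpowers_and_eqOn hc hcG hp hlow' hmulti _
    (hswap u w hu hw)
  obtain ⟨z, hz⟩ : ∃ z, z = (g₂ * g₁)⁻¹ * (g₁ * g₂) := ⟨_, rfl⟩
  have hzG : z ∈ G := hz ▸ G.mul_mem (G.inv_mem (G.mul_mem hg₂ hg₁)) (G.mul_mem hg₁ hg₂)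
  set ρ := Equiv.swap u v * Equiv.swap u w with hρ
  have hρ3 : ρ.IsThreeCycle := Equiv.Perm.isThreeCycle_swap_mul_swap_same huv huw hvw
  -- `τ` is the commutator of the two swaps, which are involutions.
  set τ := ρ * ρ with hτ
  have hτ3 : τ.IsThreeCycle := hρ3.isThreeCycle_sq
  have hτfix : ∀ x ∈ c.support, τ x = x := by
    intro x hx
    simp [hτ, hρ, hswap u v hu hv x hx, hswap u w hu hw x hx]
  have hzτ : ∀ x ∉ c.support, z x = τ x := by
    intro x hx
    have h1 := hswap' u w hu hw x hx
    have h2 := hswap' u v hu hv _ h1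
    have h3 := hswap' u w hu hw _ h2
    have h4 := hswap' u v hu hv _ h3
    rw [hz, Equiv.Perm.mul_apply, Equiv.Perm.inv_eq_iff_eq]
    simp only [hτ, hρ, Equiv.Perm.mul_apply, he₂ x hx, he₁ _ h1, he₁ _ h4, Equiv.swap_apply_self,
      he₂ _ h3]
  -- `z` centralizes `c`, so it acts on `c.support` as a power `c ^ i`; raising it to the power `p`
  -- kills that factor and leaves a power of the 3-cycle `τ`.
  obtain ⟨hinv, i, hi⟩ := hc.commute_iff.1 (hz ▸ commute_of_conj_mem_zpowers hn₁ hn₂)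
  have hzi : z = τ * c ^ i := by
    ext1 x
    by_cases hx : x ∈ c.support
    · have h1 : (c ^ i) x = z x := by
        rw [show c ^ i = _ from hi, Equiv.Perm.ofSubtype_subtypePerm_of_mem hinv hx]
      rw [Equiv.Perm.mul_apply, h1, hτfix _ ((hinv x).2 hx)]
    · rw [Equiv.Perm.mul_apply, Equiv.Perm.zpow_apply_eq_self_of_apply_eq_self
        (Equiv.Perm.notMem_support.1 hx), hzτ x hx]
  have hdisj : τ.Disjoint c := fun x ↦ by
    by_cases hx : x ∈ c.support
    · exact Or.inl (hτfix x hx)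
    · exact Or.inr (Equiv.Perm.notMem_support.1 hx)
  have hzp : z ^ c.support.card = τ ^ c.support.card := by
    rw [hzi, (hdisj.commute.zpow_right i).mul_pow, ← zpow_natCast (c ^ i), zpow_comm,
      zpow_natCast, ← hc.orderOf, pow_orderOf_eq_one, one_zpow, mul_one]
  have h3 : (z ^ c.support.card).IsThreeCycle := by
    rw [hzp, ← card_support_eq_three_iff, Equiv.Perm.support_pow_coprime,
      hτ3.card_support]
    rw [hτ3.orderOf, Nat.coprime_primes hp Nat.prime_three]
    -- `p ≠ 3` because `2 * p > d ≥ 8`.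
    omega
  exact Equiv.Perm.alternatingGroup_le_of_isPreprimitive_of_isThreeCycle_mem hprim h3
    (G.pow_mem hzG _)
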